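/- arXiv:2509.17739 — 4 statements merged into one kernel-verified Lean document; each statement's English description precedes it below -/
import Mathlib

section
/- Let S = (X, X₀, f) be a δ-GAS transition system with X ⊂ ℝⁿ compact and X₀ = X, and let ε : X × X → ℝ_{>0} be a continuous resolution function (hence attaining a strictly positive global minimum on the compact set X × X), with resolution relation R̄ = {(x,x̂) ∈ X × X : d(x,x̂) ≤ ε(x,x̂)}. Then there exist a deterministic abstraction Ŝ of S and a relation R ⊆ X × X̂ which is a multi-resolution approximate bisimulation between S and Ŝ with resolution R̄; that is, 𝒲_S(R̄) ≠ ∅. -/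
/-- A function `β : ℝ≥0 × ℝ≥0 → ℝ≥0` is of class 𝒦ℒ. -/
def IsClassKL (β : ℝ → ℝ → ℝ) : Prop :=
  (∀ t ≥ (0 : ℝ), ContinuousOn (fun s => β s t) (Set.Ici 0) ∧
      StrictMonoOn (fun s => β s t) (Set.Ici 0) ∧ β 0 t = 0) ∧
  (∀ s ≥ (0 : ℝ), Filter.Tendsto (fun t => β s t) Filter.atTop (nhds 0))

theorem pseudo_aux {E : Type*} [MetricSpace E] (X : Set E) (f : E → E)
    (hf : Set.MapsTo f X X)
    (huc : ∀ η > (0 : ℝ), ∃ δ > (0 : ℝ), ∀ x ∈ X, ∀ y ∈ X, dist x y ≤ δ → dist (f x) (f y) ≤ η)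
    (N : ℕ) : ∀ η > (0 : ℝ), ∃ δ > (0 : ℝ), ∀ y : ℕ → E, (∀ k, y k ∈ X) →
      (∀ k, dist (f (y k)) (y (k + 1)) ≤ δ) → ∀ x ∈ X, dist x (y 0) ≤ δ →
      ∀ j ≤ N, dist (f^[j] x) (y j) ≤ η := by
  induction N with
  | zero =>
    intro η hη
    refine ⟨η, hη, fun y _ _ x _ h j hj => ?_⟩
    obtain rfl : j = 0 := by omega
    simpa using h
  | succ N ih =>
    intro η hη
    obtain ⟨d, hd, hd'⟩ := huc (η / 2) (by positivity)
    obtain ⟨a, ha, ha'⟩ := ih η hη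
    obtain ⟨b, hb, hb'⟩ := ih d hd
    refine ⟨min (η / 2) (min a b), by positivity, fun y hy hp x hx h j hj => ?_⟩
    have h1 : min (η / 2) (min a b) ≤ η / 2 := min_le_left _ _
    have h2 : min (η / 2) (min a b) ≤ a := (min_le_right _ _).trans (min_le_left _ _)
    have h3 : min (η / 2) (min a b) ≤ b := (min_le_right _ _).trans (min_le_right _ _)
    rcases Nat.lt_or_ge N j with hj' | hj'
    · obtain rfl : j = N + 1 := by omega
      have h4 := hb' y hy (fun k => (hp k).trans h3) x hx (h.trans h3) N le_rfl
      have h5 := hd' _ (hf.iterate N hx) _ (hy N) h4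
      rw [Function.iterate_succ_apply']
      have h6 := dist_triangle (f (f^[N] x)) (f (y N)) (y (N + 1))
      have h7 := hp N
      linarith
    · exact ha' y hy (fun k => (hp k).trans h2) x hx (h.trans h2) j hj'

/-- For a δ-GAS system `S = (X, X, f)` on a compact `X ⊂ ℝⁿ` and any continuous
positive resolution function `ε : X × X → ℝ_{>0}`, with resolution relation
`R̄ = {(x,x̂) ∈ X × X : dist x x̂ ≤ ε x x̂}`, there exist a deterministic abstraction `Ŝ` of `S`
and a multi-resolution approximate bisimulation `R` between `S` and `Ŝ` with resolution `R̄`;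
i.e. `𝒲_S(R̄) ≠ ∅`. -/
theorem stmt3 (n : ℕ)
    (X : Set (EuclideanSpace ℝ (Fin n)))
    (f : EuclideanSpace ℝ (Fin n) → EuclideanSpace ℝ (Fin n))
    (hXcomp : IsCompact X) (hXne : X.Nonempty) (hf : Set.MapsTo f X X)
    (β : ℝ → ℝ → ℝ) (hβ : IsClassKL β)
    (hGAS : ∀ x ∈ X, ∀ x' ∈ X, ∀ k : ℕ,
      dist (f^[k] x) (f^[k] x') ≤ β (dist x x') (k : ℝ))
    (ε : EuclideanSpace ℝ (Fin n) → EuclideanSpace ℝ (Fin n) → ℝ)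
    (hεpos : ∀ x ∈ X, ∀ y ∈ X, 0 < ε x y)
    (hεcont : ContinuousOn (fun p : EuclideanSpace ℝ (Fin n) × EuclideanSpace ℝ (Fin n) =>
      ε p.1 p.2) (X ×ˢ X)) :
    ∃ Xhat : Set (EuclideanSpace ℝ (Fin n)), Xhat ⊆ X ∧ Xhat.Finite ∧
      ∃ κ : EuclideanSpace ℝ (Fin n) → EuclideanSpace ℝ (Fin n),
        (∀ x ∈ X, κ x ∈ Xhat) ∧ (∀ y ∈ Xhat, ∃ x ∈ X, κ x = y) ∧
        ∃ ghat : EuclideanSpace ℝ (Fin n) → EuclideanSpace ℝ (Fin n),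
          (∀ y ∈ Xhat, ghat y = κ (f y)) ∧
          ∃ R : Set (EuclideanSpace ℝ (Fin n) × EuclideanSpace ℝ (Fin n)),
            R ⊆ X ×ˢ Xhat ∧
            (∀ x ∈ X, ∃ y ∈ κ '' X, (x, y) ∈ R) ∧
            (∀ y ∈ κ '' X, ∃ x ∈ X, (x, y) ∈ R) ∧
            (∀ p ∈ R, (f p.1, ghat p.2) ∈ R) ∧
            (∀ p ∈ R, dist p.1 p.2 ≤ ε p.1 p.2) := by
  obtain ⟨hβ1, hβ2⟩ := hβ
  obtain ⟨e, he, hemin⟩ : ∃ e > (0 : ℝ), ∀ x ∈ X, ∀ y ∈ X, e ≤ ε x y := by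
    obtain ⟨p, hp, hmin⟩ := (hXcomp.prod hXcomp).exists_isMinOn (hXne.prod hXne) hεcont
    exact ⟨ε p.1 p.2, hεpos _ hp.1 _ hp.2, fun x hx y hy => hmin (Set.mk_mem_prod hx hy)⟩
  have huc : ∀ η > (0 : ℝ), ∃ δ > (0 : ℝ), ∀ x ∈ X, ∀ y ∈ X, dist x y ≤ δ →
      dist (f x) (f y) ≤ η := by
    intro η hη
    obtain ⟨hc, -, h0⟩ := hβ1 1 zero_le_one
    obtain ⟨d, hd, hd'⟩ := Metric.continuousOn_iff.1 hc 0 (Set.mem_Ici.2 le_rfl) η hη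
    refine ⟨d / 2, by positivity, fun x hx y hy hxy => ?_⟩
    have h1 := hd' (dist x y) (Set.mem_Ici.2 dist_nonneg) (by
      rw [Real.dist_eq, sub_zero, abs_of_nonneg dist_nonneg]; linarith)
    rw [h0, Real.dist_eq, sub_zero] at h1
    have h2 := hGAS x hx y hy 1
    simp only [Function.iterate_one, Nat.cast_one] at h2
    exact h2.trans ((le_abs_self _).trans h1.le)
  obtain ⟨N, hN⟩ : ∃ N : ℕ, ∀ x ∈ X, ∀ y ∈ X, dist (f^[N] x) (f^[N] y) ≤ e / 2 := by
    have h1 := (hβ2 (Metric.diam X) Metric.diam_nonneg).comp (tendsto_natCast_atTop_atTop (R := ℝ))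
    obtain ⟨N, hN⟩ := (h1.eventually (gt_mem_nhds (half_pos he))).exists
    refine ⟨N, fun x hx y hy => (hGAS x hx y hy N).trans (le_trans ?_ hN.le)⟩
    exact (hβ1 N (Nat.cast_nonneg N)).2.1.monotoneOn (Set.mem_Ici.2 dist_nonneg)
      (Set.mem_Ici.2 Metric.diam_nonneg) (Metric.dist_le_diam_of_mem hXcomp.isBounded hx hy)
  obtain ⟨δ, hδ, hps⟩ := pseudo_aux X f hf huc N (e / 2) (half_pos he)
  obtain ⟨t, htX, htf, htc⟩ := hXcomp.finite_cover_balls hδ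
  have hex : ∀ x, ∃ y, x ∈ X → y ∈ t ∧ dist x y ≤ δ := by
    intro x
    by_cases hx : x ∈ X
    · obtain ⟨y, hy, hxy⟩ := Set.mem_iUnion₂.1 (htc hx)
      exact ⟨y, fun _ => ⟨hy, (Metric.mem_ball.1 hxy).le⟩⟩
    · exact ⟨x, fun h => absurd h hx⟩
  choose κ hκ using hex
  have hsub : κ '' X ⊆ t := by
    rintro _ ⟨x, hx, rfl⟩
    exact (hκ x hx).1
  have hg : Set.MapsTo (fun y => κ (f y)) (κ '' X) (κ '' X) := by
    intro y hy
    exact ⟨f y, hf (htX (hsub hy)), rfl⟩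
  refine ⟨κ '' X, hsub.trans htX, htf.subset hsub, κ, fun x hx => ⟨x, hx, rfl⟩,
    fun y hy => hy, fun y => κ (f y), fun y _ => rfl,
    {p | ∃ x ∈ X, ∃ k : ℕ, p = (f^[k] x, (fun y => κ (f y))^[k] (κ x))}, ?_, ?_, ?_, ?_, ?_⟩
  · rintro _ ⟨x, hx, k, rfl⟩
    exact ⟨hf.iterate k hx, hg.iterate k ⟨x, hx, rfl⟩⟩
  · intro x hx
    exact ⟨κ x, ⟨x, hx, rfl⟩, x, hx, 0, rfl⟩
  · rintro _ ⟨x, hx, rfl⟩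
    exact ⟨x, hx, x, hx, 0, rfl⟩
  · rintro _ ⟨x, hx, k, rfl⟩
    refine ⟨x, hx, k + 1, ?_⟩
    simp only [Function.iterate_succ_apply']
  · rintro _ ⟨x, hx, k, rfl⟩
    obtain ⟨y, hydef⟩ : ∃ y : ℕ → EuclideanSpace ℝ (Fin n),
      ∀ k, y k = (fun y => κ (f y))^[k] (κ x) := ⟨_, fun _ => rfl⟩
    have hyX : ∀ k, y k ∈ X := fun k => by
      rw [hydef]; exact htX (hsub (hg.iterate k ⟨x, hx, rfl⟩))
    have hyp : ∀ k, dist (f (y k)) (y (k + 1)) ≤ δ := fun k => by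
      rw [hydef (k + 1), Function.iterate_succ_apply', ← hydef k]
      exact (hκ _ (hf (hyX k))).2
    have hy0 : dist x (y 0) ≤ δ := by
      rw [hydef 0]; exact (hκ x hx).2
    rw [← hydef k]
    refine le_trans ?_ (hemin _ (hf.iterate k hx) _ (hyX k))
    dsimp only
    rcases le_total k N with hk | hk
    · have := hps y hyX hyp x hx hy0 k hk
      linarith
    · obtain ⟨m, rfl⟩ := Nat.exists_eq_add_of_le' hk
      have h1 := hps (fun j => y (m + j)) (fun j => hyX _) (fun j => hyp (m + j)) (y m) (hyX m)
        (by simpa using hδ.le) N le_rfl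
      have h2 := hN (f^[m] x) (hf.iterate m hx) (y m) (hyX m)
      rw [← Function.iterate_add_apply, add_comm N m] at h2
      have h3 := dist_triangle (f^[m + N] x) (f^[N] (y m)) (y (m + N))
      linarith
end

section
/- Let S = (X, X₀, f) be a δ-UB transition system with X ⊂ ℝⁿ compact and X₀ = X, and suppose f has an asymptotically stable equilibrium x* ∈ X such that X is contained in the region of attraction of x* (fᵏ(x) → x* as k → ∞ for every x ∈ X). Then for every continuous resolution function ε : X × X → ℝ_{>0}, with resolution relation R̄ = {(x,x̂) ∈ X × X : d(x,x̂) ≤ ε(x,x̂)}, there exist a finite-state deterministic abstraction Ŝ of S and a relation R ⊆ X × X̂ which is a multi-resolution approximate bisimulation between S and Ŝ with resolution R̄; that is, 𝒲_S(R̄) ≠ ∅. -/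
/-- A function `α : ℝ≥0 → ℝ≥0` is of class 𝒦 if it is continuous, strictly increasing and
`α 0 = 0`. -/
def IsClassK (α : ℝ → ℝ) : Prop :=
  ContinuousOn α (Set.Ici 0) ∧ StrictMonoOn α (Set.Ici 0) ∧ α 0 = 0

/-- Let `S = (X, X, f)` be a δ-UB system on a compact `X ⊂ ℝⁿ` with an
asymptotically stable equilibrium `x*` whose region of attraction contains `X`.  Then for
every continuous positive resolution function `ε`, with resolution relation
`R̄ = {(x,x̂) ∈ X × X : dist x x̂ ≤ ε x x̂}`, there exist a finite-state deterministic
abstraction `Ŝ` of `S` and a multi-resolution approximate bisimulation `R` between `S` and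
`Ŝ` with resolution `R̄`; i.e. `𝒲_S(R̄) ≠ ∅`. -/
theorem stmt7 (n : ℕ)
    (X : Set (EuclideanSpace ℝ (Fin n)))
    (f : EuclideanSpace ℝ (Fin n) → EuclideanSpace ℝ (Fin n))
    (hXcomp : IsCompact X) (hXne : X.Nonempty) (hf : Set.MapsTo f X X)
    (α : ℝ → ℝ) (hα : IsClassK α)
    (hUB : ∀ x ∈ X, ∀ x' ∈ X, ∀ k : ℕ, 1 ≤ k →
      dist (f^[k] x) (f^[k] x') ≤ α (dist x x'))
    (xstar : EuclideanSpace ℝ (Fin n)) (hxstar : xstar ∈ X)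
    (hfix : f xstar = xstar)
    (hstab : ∀ U ∈ nhds xstar, ∃ V ∈ nhds xstar, ∀ x ∈ V ∩ X, ∀ k : ℕ, f^[k] x ∈ U)
    (hattr : ∀ x ∈ X,
      Filter.Tendsto (fun k : ℕ => f^[k] x) Filter.atTop (nhds xstar))
    (ε : EuclideanSpace ℝ (Fin n) → EuclideanSpace ℝ (Fin n) → ℝ)
    (hεpos : ∀ x ∈ X, ∀ y ∈ X, 0 < ε x y)
    (hεcont : ContinuousOn (fun p : EuclideanSpace ℝ (Fin n) × EuclideanSpace ℝ (Fin n) =>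
      ε p.1 p.2) (X ×ˢ X)) :
    ∃ Xhat : Set (EuclideanSpace ℝ (Fin n)), Xhat ⊆ X ∧ Xhat.Finite ∧
      ∃ κ : EuclideanSpace ℝ (Fin n) → EuclideanSpace ℝ (Fin n),
        (∀ x ∈ X, κ x ∈ Xhat) ∧ (∀ y ∈ Xhat, ∃ x ∈ X, κ x = y) ∧
        ∃ ghat : EuclideanSpace ℝ (Fin n) → EuclideanSpace ℝ (Fin n),
          (∀ y ∈ Xhat, ghat y = κ (f y)) ∧
          ∃ R : Set (EuclideanSpace ℝ (Fin n) × EuclideanSpace ℝ (Fin n)),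
            R ⊆ X ×ˢ Xhat ∧
            (∀ x ∈ X, ∃ y ∈ κ '' X, (x, y) ∈ R) ∧
            (∀ y ∈ κ '' X, ∃ x ∈ X, (x, y) ∈ R) ∧
            (∀ p ∈ R, (f p.1, ghat p.2) ∈ R) ∧
            (∀ p ∈ R, dist p.1 p.2 ≤ ε p.1 p.2) := by
  classical
  obtain ⟨e, he, hεe⟩ : ∃ e > 0, ∀ x ∈ X, ∀ y ∈ X, e ≤ ε x y := by
    obtain ⟨p, hp, hmin⟩ := (hXcomp.prod hXcomp).exists_isMinOn (hXne.prod hXne) hεcont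
    exact ⟨ε p.1 p.2, hεpos _ hp.1 _ hp.2, fun x hx y hy =>
      hmin (show (x, y) ∈ X ×ˢ X from ⟨hx, hy⟩)⟩
  have hmem : ∀ k, ∀ x ∈ X, f^[k] x ∈ X := fun k x hx => hf.iterate k hx
  have hfixk : ∀ k, f^[k] xstar = xstar := fun k => Function.iterate_fixed hfix k
  have net : ∀ η > 0, ∃ t ⊆ X, t.Finite ∧ ∀ x ∈ X, ∃ y ∈ t, ∀ j : ℕ,
      dist (f^[j] x) (f^[j] y) ≤ η := by
    intro η hη
    obtain ⟨hc, -, h0⟩ := hα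
    obtain ⟨δ, hδ, hd⟩ := Metric.continuousWithinAt_iff.1 (hc 0 (by simp)) η hη
    obtain ⟨t, htX, htf, hcov⟩ := hXcomp.finite_cover_balls (e := min δ η) (lt_min hδ hη)
    refine ⟨t, htX, htf, fun x hx => ?_⟩
    obtain ⟨y, hy, hxy⟩ := Set.mem_iUnion₂.1 (hcov hx)
    rw [Metric.mem_ball, lt_min_iff] at hxy
    refine ⟨y, hy, fun j => ?_⟩
    rcases Nat.eq_zero_or_pos j with rfl | hj
    · exact hxy.2.le
    · refine (hUB x hx y (htX hy) j hj).trans ?_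
      have := hd (x := dist x y) dist_nonneg (by
        rw [Real.dist_eq, sub_zero, abs_of_nonneg dist_nonneg]; exact hxy.1)
      rw [h0, Real.dist_eq, sub_zero] at this
      exact (le_abs_self _).trans this.le
  obtain ⟨N, hN1, hN⟩ : ∃ N : ℕ, 1 ≤ N ∧ ∀ x ∈ X, ∀ j ≥ N, dist (f^[j] x) xstar ≤ e / 4 := by
    obtain ⟨t, htX, htf, hcov⟩ := net (e / 8) (by positivity)
    have h1 : ∀ᶠ k : ℕ in Filter.atTop, ∀ y ∈ t, dist (f^[k] y) xstar < e / 8 := by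
      rw [Filter.eventually_all_finite htf]
      intro y hy
      exact (hattr y (htX hy)).eventually (Metric.ball_mem_nhds xstar (by positivity))
    obtain ⟨N, hN⟩ := Filter.eventually_atTop.1 h1
    refine ⟨N + 1, by omega, fun x hx j hj => ?_⟩
    obtain ⟨y, hy, hxy⟩ := hcov x hx
    have := hN j (by omega) y hy
    have := dist_triangle (f^[j] x) (f^[j] y) xstar
    have := hxy j
    linarith
  obtain ⟨η, hη, hNη⟩ : ∃ η > 0, (N : ℝ) * η ≤ e / 4 := by
    have hNp : (0 : ℝ) < N := by exact_mod_cast hN1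
    exact ⟨e / 4 / N, by positivity, by field_simp; exact le_refl _⟩
  obtain ⟨t, htX, htf, hcov⟩ := net η hη
  choose! q hqt hq using hcov
  let V : Set (EuclideanSpace ℝ (Fin n)) := {y | ∀ j : ℕ, dist (f^[j] y) xstar ≤ e / 2}
  have hxV : xstar ∈ V := fun j => by rw [hfixk, dist_self]; positivity
  let κ : EuclideanSpace ℝ (Fin n) → EuclideanSpace ℝ (Fin n) :=
    fun x => if x ∈ V then xstar else q x
  have κ1 : ∀ x, x ∈ V → κ x = xstar := fun x hx => if_pos hx
  have κ2 : ∀ x, x ∉ V → κ x = q x := fun x hx => if_neg hx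
  have hκX : ∀ x ∈ X, κ x ∈ X := by
    intro x hx
    by_cases h : x ∈ V
    · rw [κ1 x h]; exact hxstar
    · rw [κ2 x h]; exact htX (hqt x hx)
  have hsub : κ '' X ⊆ X := by rintro _ ⟨x, hx, rfl⟩; exact hκX x hx
  let R : Set (EuclideanSpace ℝ (Fin n) × EuclideanSpace ℝ (Fin n)) :=
    {p | p.1 ∈ X ∧ p.2 ∈ κ '' X ∧ ((p.2 = xstar ∧ ∀ j : ℕ, dist (f^[j] p.1) xstar ≤ e) ∨
      ∃ k : ℕ, k < N ∧ (∃ x₀ ∈ X, p.1 = f^[k] x₀) ∧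
        ∀ j : ℕ, dist (f^[j] p.1) (f^[j] p.2) ≤ (k + 1) * η)}
  have hinit : ∀ x ∈ X, (x, κ x) ∈ R := by
    intro x hx
    refine ⟨hx, ⟨x, hx, rfl⟩, ?_⟩
    by_cases h : x ∈ V
    · exact Or.inl ⟨κ1 x h, fun j => (h j).trans (by linarith)⟩
    · refine Or.inr ⟨0, by omega, ⟨x, hx, rfl⟩, fun j => ?_⟩
      simp only [κ2 x h]
      simpa using hq x hx j
  have hkN : ∀ k : ℕ, k < N → ((k : ℝ) + 1) * η ≤ e / 4 := by
    intro k hk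
    have : (k : ℝ) + 1 ≤ N := by exact_mod_cast hk
    exact (mul_le_mul_of_nonneg_right this hη.le).trans hNη
  refine ⟨κ '' X, hsub, ?_, κ, fun x hx => ⟨x, hx, rfl⟩, fun y hy => hy, fun y => κ (f y),
    fun _ _ => rfl, R, fun p hp => ⟨hp.1, hp.2.1⟩, fun x hx => ⟨κ x, ⟨x, hx, rfl⟩, hinit x hx⟩,
    ?_, ?_, ?_⟩
  · refine (htf.insert xstar).subset ?_
    rintro _ ⟨x, hx, rfl⟩
    by_cases h : x ∈ V
    · rw [κ1 x h]; exact Set.mem_insert _ _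
    · rw [κ2 x h]; exact Set.mem_insert_of_mem _ (hqt x hx)
  · rintro _ ⟨x, hx, rfl⟩
    exact ⟨x, hx, hinit x hx⟩
  · rintro ⟨x, y⟩ ⟨hx, hy, h⟩
    simp only at hx hy h
    refine ⟨hf hx, ⟨f y, hf (hsub hy), rfl⟩, ?_⟩
    simp only
    rcases h with ⟨rfl, h⟩ | ⟨k, hk, ⟨x₀, hx₀, hxx⟩, h⟩
    · left
      refine ⟨by rw [hfix]; exact κ1 _ hxV, fun j => ?_⟩
      have := h (j + 1)
      rwa [Function.iterate_succ_apply] at this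
    · have h' : ∀ j : ℕ, dist (f^[j] (f x)) (f^[j] (f y)) ≤ (k + 1) * η := fun j => by
        have := h (j + 1)
        rwa [Function.iterate_succ_apply, Function.iterate_succ_apply] at this
      have hk4 := hkN k hk
      by_cases hV : f y ∈ V
      · left
        refine ⟨κ1 _ hV, fun j => ?_⟩
        have := dist_triangle (f^[j] (f x)) (f^[j] (f y)) xstar
        have := h' j
        have := hV j
        linarith
      · right
        have hfx : f x = f^[k + 1] x₀ := by rw [hxx, Function.iterate_succ_apply']
        refine ⟨k + 1, ?_, ⟨x₀, hx₀, hfx⟩, fun j => ?_⟩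
        · by_contra hlt
          apply hV
          intro j
          have h2 := hN x₀ hx₀ (j + (k + 1)) (by omega)
          rw [Function.iterate_add_apply, ← hfx] at h2
          have := dist_triangle_left (f^[j] (f y)) xstar (f^[j] (f x))
          have := h' j
          linarith
        · rw [κ2 _ hV]
          have := dist_triangle (f^[j] (f x)) (f^[j] (f y)) (f^[j] (q (f y)))
          have := h' j
          have := hq (f y) (hf (hsub hy)) j
          push_cast
          linarith
  · rintro ⟨x, y⟩ ⟨hx, hy, h⟩
    simp only at hx hy h ⊢
    refine le_trans ?_ (hεe x hx y (hsub hy))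
    rcases h with ⟨rfl, h⟩ | ⟨k, hk, -, h⟩
    · exact h 0
    · have := h 0
      have := hkN k hk
      simp only [Function.iterate_zero, id] at *
      linarith
end

section
/- Let f be defined on a domain D ⊆ ℝⁿ with f : D → D, let X ⊆ D be a compact set with X₀ = X, and suppose the system is δ-UB on D, i.e. there is a class K function α with d(fᵏ(x), fᵏ(x')) ≤ α(d(x,x')) for all x, x' ∈ D and k ≥ 1. Assume X is transient: there exists τ ∈ ℕ such that for every x ∈ X there is q ≤ τ with f^q(x) ∉ X. Then for every continuous resolution function ε : X × X → ℝ_{>0}, with resolution relation R̄ = {(x,x̂) ∈ X × X : d(x,x̂) ≤ ε(x,x̂)}, there exist a finite-state deterministic abstraction Ŝ (with abstract states in X and transition consistency imposed for pairs whose successors remain in X) and a relation R ⊆ X × X̂ which is a multi-resolution approximate bisimulation between S and Ŝ with resolution R̄; that is, 𝒲_S(R̄) ≠ ∅. -/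
/-- Let `f : D → D` on a domain `D ⊆ ℝⁿ`, let `X ⊆ D` be compact with `X₀ = X`,
and suppose the system is δ-UB on `D`.  Assume `X` is transient: there is `τ ∈ ℕ` such that
every `x ∈ X` leaves `X` within `τ` steps.  Then for every continuous positive resolution
function `ε`, with resolution relation `R̄ = {(x,x̂) ∈ X × X : dist x x̂ ≤ ε x x̂}`, there exist
a finite-state deterministic abstraction `Ŝ` (abstract states in `X`, transition consistency
imposed for pairs whose successors remain in `X`) and a relation `R ⊆ X × X̂` that is a
multi-resolution approximate bisimulation with resolution `R̄`; i.e. `𝒲_S(R̄) ≠ ∅`. -/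
theorem stmt8 (n : ℕ)
    (D X : Set (EuclideanSpace ℝ (Fin n)))
    (f : EuclideanSpace ℝ (Fin n) → EuclideanSpace ℝ (Fin n))
    (hfD : Set.MapsTo f D D) (hXD : X ⊆ D)
    (hXcomp : IsCompact X) (hXne : X.Nonempty)
    (α : ℝ → ℝ) (hα : IsClassK α)
    (hUB : ∀ x ∈ D, ∀ x' ∈ D, ∀ k : ℕ, 1 ≤ k →
      dist (f^[k] x) (f^[k] x') ≤ α (dist x x'))
    (τ : ℕ) (htrans : ∀ x ∈ X, ∃ q : ℕ, q ≤ τ ∧ f^[q] x ∉ X)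
    (ε : EuclideanSpace ℝ (Fin n) → EuclideanSpace ℝ (Fin n) → ℝ)
    (hεpos : ∀ x ∈ X, ∀ y ∈ X, 0 < ε x y)
    (hεcont : ContinuousOn (fun p : EuclideanSpace ℝ (Fin n) × EuclideanSpace ℝ (Fin n) =>
      ε p.1 p.2) (X ×ˢ X)) :
    ∃ Xhat : Set (EuclideanSpace ℝ (Fin n)), Xhat ⊆ X ∧ Xhat.Finite ∧
      ∃ κ : EuclideanSpace ℝ (Fin n) → EuclideanSpace ℝ (Fin n),
        (∀ x ∈ X, κ x ∈ Xhat) ∧ (∀ y ∈ Xhat, ∃ x ∈ X, κ x = y) ∧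
        ∃ ghat : EuclideanSpace ℝ (Fin n) → EuclideanSpace ℝ (Fin n),
          (∀ y ∈ Xhat, f y ∈ X → ghat y = κ (f y)) ∧
          ∃ R : Set (EuclideanSpace ℝ (Fin n) × EuclideanSpace ℝ (Fin n)),
            R ⊆ X ×ˢ Xhat ∧
            (∀ x ∈ X, ∃ y ∈ κ '' X, (x, y) ∈ R) ∧
            (∀ y ∈ κ '' X, ∃ x ∈ X, (x, y) ∈ R) ∧
            (∀ p ∈ R, f p.1 ∈ X → (f p.1, ghat p.2) ∈ R) ∧
            (∀ p ∈ R, dist p.1 p.2 ≤ ε p.1 p.2) := by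
  classical
  obtain ⟨hαc, -, hα0⟩ := hα
  -- lower bound of the resolution
  obtain ⟨e, he, hmin⟩ : ∃ e : ℝ, 0 < e ∧ ∀ x ∈ X, ∀ y ∈ X, e ≤ ε x y := by
    obtain ⟨p, hp, hpm⟩ := (hXcomp.prod hXcomp).exists_isMinOn (hXne.prod hXne) hεcont
    refine ⟨ε p.1 p.2, hεpos _ hp.1 _ hp.2, fun x hx y hy => ?_⟩
    exact isMinOn_iff.1 hpm (x, y) ⟨hx, hy⟩
  obtain ⟨δ, hδ, hδα⟩ : ∃ δ : ℝ, 0 < δ ∧ ∀ t : ℝ, 0 ≤ t → t < δ → α t ≤ e := by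
    have h0 := hαc 0 (Set.mem_Ici.2 le_rfl)
    obtain ⟨δ, hδ, h⟩ := Metric.continuousWithinAt_iff.1 h0 e he
    refine ⟨δ, hδ, fun t ht htd => ?_⟩
    have h1 := h (x := t) ht (by rw [Real.dist_eq, sub_zero, abs_of_nonneg ht]; exact htd)
    rw [Real.dist_eq, hα0, sub_zero] at h1
    exact (le_abs_self _).trans h1.le
  have hη : 0 < min δ e / 2 := by positivity
  obtain ⟨t, -, htf, hcov⟩ := hXcomp.finite_cover_balls hη
  have hc : ∀ x : EuclideanSpace ℝ (Fin n), ∃ z, x ∈ X → z ∈ t ∧ dist x z < min δ e / 2 := by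
    intro x
    by_cases hx : x ∈ X
    · have := hcov hx
      simp only [Set.mem_iUnion, Metric.mem_ball, exists_prop] at this
      obtain ⟨z, hz⟩ := this
      exact ⟨z, fun _ => hz⟩
    · exact ⟨x, fun h => absurd h hx⟩
  choose c hc using hc
  obtain ⟨N, hN⟩ : ∃ N : EuclideanSpace ℝ (Fin n) → ℕ,
      ∀ x, N x = sInf {q : ℕ | f^[q] x ∉ X} := ⟨_, fun _ => rfl⟩
  have hNmem : ∀ x ∈ X, f^[N x] x ∉ X := by
    intro x hx
    obtain ⟨q, -, hq⟩ := htrans x hx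
    rw [hN]
    exact Nat.sInf_mem (s := {q : ℕ | f^[q] x ∉ X}) ⟨q, hq⟩
  have hNτ : ∀ x ∈ X, N x ≤ τ := by
    intro x hx
    obtain ⟨q, hq, hq'⟩ := htrans x hx
    rw [hN]
    exact (Nat.sInf_le (s := {q : ℕ | f^[q] x ∉ X}) hq').trans hq
  have hNlt : ∀ x, ∀ k < N x, f^[k] x ∈ X := by
    intro x k hk
    rw [hN] at hk
    exact not_not.1 (Nat.notMem_of_lt_sInf hk)
  have hN0 : ∀ x ∈ X, 0 < N x := by
    intro x hx
    rcases Nat.eq_zero_or_pos (N x) with h | h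
    · have := hNmem x hx
      rw [h] at this
      exact absurd hx this
    · exact h
  -- representatives
  have hr : ∀ z : EuclideanSpace ℝ (Fin n), ∃ r, (∃ x ∈ X, c x = z) →
      r ∈ X ∧ c r = z ∧ ∀ x ∈ X, c x = z → N x ≤ N r := by
    intro z
    by_cases h : ∃ x ∈ X, c x = z
    · have hfin : (N '' {x | x ∈ X ∧ c x = z}).Finite := by
        refine (Set.finite_Iic τ).subset ?_
        rintro _ ⟨x, hx, rfl⟩
        exact hNτ x hx.1
      obtain ⟨x₀, hx₀, hc₀⟩ := h
      obtain ⟨m, ⟨r, hr, rfl⟩, hm⟩ :=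
        Set.exists_max_image _ id hfin ⟨N x₀, x₀, ⟨hx₀, hc₀⟩, rfl⟩
      exact ⟨r, fun _ => ⟨hr.1, hr.2, fun x hx hxz => hm (N x) ⟨x, ⟨hx, hxz⟩, rfl⟩⟩⟩
    · exact ⟨z, fun h' => absurd h' h⟩
  choose r hr using hr
  have hrX : ∀ x ∈ X, r (c x) ∈ X := fun x hx => (hr (c x) ⟨x, hx, rfl⟩).1
  have hrN : ∀ x ∈ X, N x ≤ N (r (c x)) := fun x hx => (hr (c x) ⟨x, hx, rfl⟩).2.2 x hx rfl
  have hrd : ∀ x ∈ X, dist x (r (c x)) < min δ e := by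
    intro x hx
    have h1 := (hc x hx).2
    have h2 := (hc _ (hrX x hx)).2
    rw [(hr (c x) ⟨x, hx, rfl⟩).2.1] at h2
    have h3 := dist_triangle_right x (r (c x)) (c x)
    linarith
  have hdist : ∀ x ∈ X, ∀ k : ℕ, dist (f^[k] x) (f^[k] (r (c x))) ≤ e := by
    intro x hx k
    have h := hrd x hx
    rcases Nat.eq_zero_or_pos k with rfl | hk
    · exact h.le.trans (min_le_right _ _)
    · exact (hUB x (hXD hx) _ (hXD (hrX x hx)) k hk).trans
        (hδα _ dist_nonneg (h.trans_le (min_le_left _ _)))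
  obtain ⟨Y, hY⟩ : ∃ Y : Set (EuclideanSpace ℝ (Fin n)),
      Y = {y | ∃ x ∈ X, ∃ k < N (r (c x)), y = f^[k] (r (c x))} := ⟨_, rfl⟩
  have hYX : Y ⊆ X := by
    rw [hY]
    rintro _ ⟨x, hx, k, hk, rfl⟩
    exact hNlt _ k hk
  have hrY : ∀ x ∈ X, r (c x) ∈ Y := by
    intro x hx
    rw [hY]
    exact ⟨x, hx, 0, hN0 _ (hrX x hx), rfl⟩
  have hstep : ∀ x ∈ X, ∀ k < N x, f (f^[k] x) ∈ X → k + 1 < N x := by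
    intro x hx k hk hf
    rw [← Function.iterate_succ_apply' f k x] at hf
    refine lt_of_le_of_ne hk fun h => hNmem x hx ?_
    rw [← h]
    exact hf
  have hYf : ∀ y ∈ Y, f y ∈ X → f y ∈ Y := by
    rw [hY]
    rintro _ ⟨x, hx, k, hk, rfl⟩ hf
    exact ⟨x, hx, k + 1, hstep _ (hrX x hx) k hk hf, (Function.iterate_succ_apply' f k _).symm⟩
  have hYfin : Y.Finite := by
    refine ((htf.prod (Set.finite_Iic τ)).image (fun p => f^[p.2] (r p.1))).subset ?_
    rw [hY]
    rintro _ ⟨x, hx, k, hk, rfl⟩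
    exact ⟨(c x, k), ⟨(hc x hx).1, hk.le.trans (hNτ _ (hrX x hx))⟩, rfl⟩
  have hκ : ∀ y ∈ Y, (if y ∈ Y then y else r (c y)) = y := fun y hy => if_pos hy
  refine ⟨Y, hYX, hYfin, fun x => if x ∈ Y then x else r (c x), ?_, ?_, f, ?_,
    {p | (∃ x ∈ X, ∃ k < N x, p = (f^[k] x, f^[k] (r (c x)))) ∨ (p.1 ∈ Y ∧ p.2 = p.1)},
    ?_, ?_, ?_, ?_, ?_⟩
  · intro x hx
    by_cases h : x ∈ Y
    · simpa [h] using h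
    · simpa [h] using hrY x hx
  · exact fun y hy => ⟨y, hYX hy, hκ y hy⟩
  · exact fun y hy hf => (hκ _ (hYf y hy hf)).symm
  · rintro p (⟨x, hx, k, hk, rfl⟩ | ⟨h1, h2⟩)
    · refine ⟨hNlt x k hk, ?_⟩
      rw [hY]
      exact ⟨x, hx, k, hk.trans_le (hrN x hx), rfl⟩
    · exact ⟨hYX h1, h2 ▸ h1⟩
  · exact fun x hx => ⟨r (c x), ⟨_, hrX x hx, hκ _ (hrY x hx)⟩,
      Or.inl ⟨x, hx, 0, hN0 x hx, rfl⟩⟩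
  · rintro _ ⟨x, hx, rfl⟩
    have hm : (if x ∈ Y then x else r (c x)) ∈ Y := by
      by_cases h : x ∈ Y
      · simpa [h] using h
      · simpa [h] using hrY x hx
    exact ⟨_, hYX hm, Or.inr ⟨hm, rfl⟩⟩
  · rintro p (⟨x, hx, k, hk, rfl⟩ | ⟨h1, h2⟩) hf
    · refine Or.inl ⟨x, hx, k + 1, hstep x hx k hk hf, ?_⟩
      simp only [Function.iterate_succ_apply']
    · exact Or.inr ⟨hYf _ h1 hf, by rw [h2]⟩
  · rintro p (⟨x, hx, k, hk, rfl⟩ | ⟨h1, h2⟩)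
    · exact (hdist x hx k).trans
        (hmin _ (hNlt x k hk) _ (hNlt _ k (hk.trans_le (hrN x hx))))
    · rw [h2, dist_self]
      exact (hεpos _ (hYX h1) _ (hYX h1)).le
end

section
/- Consider the transition system S = (X, X₀, f) with X = X₀ = [1, ∞) ⊂ ℝ and f(x) = 2x. For every ε > 0, for every countable set X̂ ⊆ X, every map ĝ : X̂ → X̂ and every X̂₀ ⊆ X̂, there is no relation R ⊆ X × X̂ satisfying the three conditions of an ε-approximate bisimulation between S and Ŝ = (X̂, X̂₀, ĝ); that is, 𝒲_S(ε) = ∅ over countable-state abstractions. -/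
/-- For the system `S = (X, X₀, f)` with `X = X₀ = [1, ∞) ⊂ ℝ` and `f(x) = 2x`,
for every `ε > 0`, every countable `X̂ ⊆ X`, every `ĝ : X̂ → X̂` and every `X̂₀ ⊆ X̂`, there is
no relation `R ⊆ X × X̂` satisfying the three conditions of an `ε`-approximate bisimulation
between `S` and `Ŝ = (X̂, X̂₀, ĝ)`; i.e. `𝒲_S(ε) = ∅` over countable-state abstractions. -/
theorem stmt15 (ε : ℝ) (hε : 0 < ε)
    (Xhat : Set ℝ) (hXhatX : Xhat ⊆ Set.Ici 1) (hcount : Xhat.Countable)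
    (ghat : ℝ → ℝ) (hghat : Set.MapsTo ghat Xhat Xhat)
    (Xhat0 : Set ℝ) (hXhat0 : Xhat0 ⊆ Xhat) :
    ¬ ∃ R : Set (ℝ × ℝ),
        R ⊆ Set.Ici 1 ×ˢ Xhat ∧
        (∀ x ∈ Set.Ici (1 : ℝ), ∃ y ∈ Xhat0, (x, y) ∈ R) ∧
        (∀ y ∈ Xhat0, ∃ x ∈ Set.Ici (1 : ℝ), (x, y) ∈ R) ∧
        (∀ p ∈ R, (2 * p.1, ghat p.2) ∈ R) ∧
        (∀ p ∈ R, dist p.1 p.2 ≤ ε) := by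
  rintro ⟨R, hR, h1, -, h2, h3⟩
  have hit : ∀ n : ℕ, ∀ x y : ℝ, (x, y) ∈ R → (2 ^ n * x, ghat^[n] y) ∈ R := by
    intro n
    induction n with
    | zero => intro x y h; simpa using h
    | succ k ih =>
      intro x y h
      have := ih _ _ (h2 _ h)
      simp only [Function.iterate_succ, Function.comp]
      rw [pow_succ, mul_assoc]
      exact this
  have huniq : ∀ x x' y : ℝ, (x, y) ∈ R → (x', y) ∈ R → x = x' := by
    intro x x' y h h'
    by_contra hne
    have hpos : 0 < |x - x'| := abs_pos.mpr (sub_ne_zero.mpr hne)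
    obtain ⟨n, hn⟩ := pow_unbounded_of_one_lt (2 * ε / |x - x'|) (one_lt_two : (1 : ℝ) < 2)
    rw [div_lt_iff₀ hpos] at hn
    have a := h3 _ (hit n _ _ h)
    have b := h3 _ (hit n _ _ h')
    have c := dist_triangle_right (2 ^ n * x) (2 ^ n * x') (ghat^[n] y)
    have d : dist (2 ^ n * x) (2 ^ n * x') = 2 ^ n * |x - x'| := by
      rw [Real.dist_eq, ← mul_sub, abs_mul, abs_of_pos (by positivity)]
    simp only at a b
    linarith
  choose! u hu0 hu using h1
  have hinj : Set.InjOn u (Set.Ici (1 : ℝ)) := by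
    intro x hx x' hx' he
    exact huniq x x' (u x) (hu x hx) (he ▸ hu x' hx')
  have hc : (Set.Ici (1 : ℝ)).Countable :=
    Set.MapsTo.countable_of_injOn (fun x hx => hXhat0 (hu0 x hx)) hinj hcount
  have := Cardinal.mk_Ici_real 1
  have h4 := hc.le_aleph0
  rw [this] at h4
  exact absurd h4 (not_le.mpr Cardinal.aleph0_lt_continuum)
end
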